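/- arXiv:2406.06734 — 3 statements merged into one kernel-verified Lean document; each statement's English description precedes it below -/
import Mathlib

section
/- Let A be an invertible n × n matrix over a field (e.g. ℝ), let N and m be positive natural numbers, and for k = 1, …, N let U_k and V_k be n × m matrices. Define the Nm × Nm block matrix M whose (k, l) block (each block of size m × m) is V_kᵀ A⁻¹ U_l + (δ_{kl}) I_m, i.e. M_{kl} = V_kᵀ A⁻¹ U_l for k ≠ l and M_{kk} = I_m + V_kᵀ A⁻¹ U_k. If M is invertible, then the matrix A + Σ_{k=1}^{N} U_k V_kᵀ is invertible and its inverse equals A⁻¹ − A⁻¹ U M⁻¹ Vᵀ A⁻¹, where U = [U_1, U_2, …, U_N] is the n × Nm matrix formed by horizontally concatenating the U_k and Vᵀ = [V_1ᵀ; V_2ᵀ; …; V_Nᵀ] is the Nm × n matrix formed by vertically stacking the V_kᵀ. -/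
open Matrix BigOperators

/-- Generalized Sherman–Morrison–Woodbury formula for a sum of `N` rank-`m`
corrections: if `A` is invertible and the capacitance block matrix `M` (with
`(k,l)` block `Vₖᵀ A⁻¹ Uₗ + δₖₗ Iₘ`) is invertible, then `A + ∑ Uₖ Vₖᵀ` is
invertible with inverse `A⁻¹ − A⁻¹ U M⁻¹ Vᵀ A⁻¹`. -/
theorem smw_general (n N m : ℕ) (hN : 0 < N) (hm : 0 < m)
    (A : Matrix (Fin n) (Fin n) ℝ) (hA : IsUnit A)
    (U V : Fin N → Matrix (Fin n) (Fin m) ℝ)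
    (M : Matrix (Fin N × Fin m) (Fin N × Fin m) ℝ)
    (hM : ∀ (k l : Fin N) (i j : Fin m),
      M (k, i) (l, j) = ((V k)ᵀ * A⁻¹ * U l) i j + (if k = l ∧ i = j then 1 else 0))
    (hMu : IsUnit M)
    (Ubig : Matrix (Fin n) (Fin N × Fin m) ℝ)
    (hUbig : ∀ (i : Fin n) (k : Fin N) (j : Fin m), Ubig i (k, j) = U k i j)
    (Vbig : Matrix (Fin N × Fin m) (Fin n) ℝ)
    (hVbig : ∀ (k : Fin N) (j : Fin m) (i : Fin n), Vbig (k, j) i = V k i j) :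
    IsUnit (A + ∑ k : Fin N, U k * (V k)ᵀ) ∧
      (A + ∑ k : Fin N, U k * (V k)ᵀ)⁻¹
        = A⁻¹ - A⁻¹ * Ubig * M⁻¹ * Vbig * A⁻¹ := by
  have hS : ∑ k : Fin N, U k * (V k)ᵀ = Ubig * (1 : Matrix (Fin N × Fin m) (Fin N × Fin m) ℝ) * Vbig := by
    rw [Matrix.mul_one]
    ext i j
    simp [Matrix.sum_apply, Matrix.mul_apply, Fintype.sum_prod_type, hUbig, hVbig]
  have hMe : (1 : Matrix (Fin N × Fin m) (Fin N × Fin m) ℝ)⁻¹ + Vbig * A⁻¹ * Ubig = M := by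
    ext ⟨k, i⟩ ⟨l, j⟩
    rw [hM, add_comm, inv_one]
    simp [Matrix.mul_apply, Matrix.one_apply, hUbig, hVbig]
  have hMu' := hMu
  rw [← hMe] at hMu'
  rw [hS]
  refine ⟨?_, ?_⟩
  · obtain ⟨_⟩ := hA.nonempty_invertible
    obtain ⟨iAC⟩ := hMu'.nonempty_invertible
    letI : Invertible (1 : Matrix (Fin N × Fin m) (Fin N × Fin m) ℝ) := invertibleOne
    simp only [← invOf_eq_nonsing_inv] at iAC
    letI := invertibleAddMulMul A Ubig 1 Vbig
    exact isUnit_of_invertible _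
  · rw [add_mul_mul_inv_eq_sub A Ubig 1 Vbig hA isUnit_one hMu', hMe]
end

section
/- Let N and m be positive natural numbers and, for k = 1, …, N, let U_k and V_k be n × m real matrices. Define the Nm × Nm block matrix M whose (k, l) block (of size m × m) is V_kᵀ U_l + (δ_{kl}) I_m, i.e. M_{kl} = V_kᵀ U_l for k ≠ l and M_{kk} = I_m + V_kᵀ U_k. If M is invertible, then I_n + Σ_{k=1}^{N} U_k V_kᵀ is invertible and (I_n + Σ_{k=1}^{N} U_k V_kᵀ)⁻¹ = I_n − U M⁻¹ Vᵀ, where U = [U_1, …, U_N] is the n × Nm horizontal concatenation of the U_k and Vᵀ = [V_1ᵀ; …; V_Nᵀ] is the Nm × n vertical concatenation of the V_kᵀ. -/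
open Matrix BigOperators

/-- Identity-matrix case of the generalized Sherman–Morrison–Woodbury formula:
if the capacitance block matrix `M` (with `(k,l)` block `Vₖᵀ Uₗ + δₖₗ Iₘ`) is
invertible, then `I + ∑ Uₖ Vₖᵀ` is invertible with inverse `I − U M⁻¹ Vᵀ`. -/
theorem smw_identity (n N m : ℕ) (hN : 0 < N) (hm : 0 < m)
    (U V : Fin N → Matrix (Fin n) (Fin m) ℝ)
    (M : Matrix (Fin N × Fin m) (Fin N × Fin m) ℝ)
    (hM : ∀ (k l : Fin N) (i j : Fin m),
      M (k, i) (l, j) = ((V k)ᵀ * U l) i j + (if k = l ∧ i = j then 1 else 0))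
    (hMu : IsUnit M)
    (Ubig : Matrix (Fin n) (Fin N × Fin m) ℝ)
    (hUbig : ∀ (i : Fin n) (k : Fin N) (j : Fin m), Ubig i (k, j) = U k i j)
    (Vbig : Matrix (Fin N × Fin m) (Fin n) ℝ)
    (hVbig : ∀ (k : Fin N) (j : Fin m) (i : Fin n), Vbig (k, j) i = V k i j) :
    IsUnit ((1 : Matrix (Fin n) (Fin n) ℝ) + ∑ k : Fin N, U k * (V k)ᵀ) ∧
      ((1 : Matrix (Fin n) (Fin n) ℝ) + ∑ k : Fin N, U k * (V k)ᵀ)⁻¹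
        = 1 - Ubig * M⁻¹ * Vbig := by
  have h1 : ∑ k : Fin N, U k * (V k)ᵀ = Ubig * Vbig := by
    ext i j
    simp [Matrix.sum_apply, Matrix.mul_apply, Fintype.sum_prod_type, hUbig, hVbig]
  have h2 : M = 1 + Vbig * Ubig := by
    ext ⟨k, i⟩ ⟨l, j⟩
    rw [hM, add_comm]
    simp [Matrix.mul_apply, Matrix.one_apply, hUbig, hVbig]
  have h3 : M * M⁻¹ = 1 :=
    Matrix.mul_nonsing_inv M ((Matrix.isUnit_iff_isUnit_det M).1 hMu)
  have h4 : (1 + Ubig * Vbig) * (1 - Ubig * M⁻¹ * Vbig) = 1 := by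
    have h5 : (1 + Ubig * Vbig) * Ubig = Ubig * M := by
      rw [h2, Matrix.add_mul, Matrix.mul_add, Matrix.one_mul, Matrix.mul_one, Matrix.mul_assoc]
    rw [Matrix.mul_sub, Matrix.mul_one, ← Matrix.mul_assoc, ← Matrix.mul_assoc, h5,
      Matrix.mul_assoc Ubig, h3, Matrix.mul_one, add_sub_cancel_right]
  rw [h1]
  exact ⟨IsUnit.of_mul_eq_one _ h4, Matrix.inv_eq_right_inv h4⟩
end

section
/- Let A be an invertible n × n real matrix, N and m positive naturals, and U_k, V_k (k = 1, …, N) n × m real matrices. If the matrix A + Σ_{k=1}^{N} U_k V_kᵀ is invertible, then the Nm × Nm block matrix M with (k, l) block equal to V_kᵀ A⁻¹ U_l + (δ_{kl}) I_m is invertible. -/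
open Matrix BigOperators

/-- Converse invertibility direction of the generalized Sherman–Morrison–Woodbury
formula: for `A` invertible, invertibility of `A + ∑ Uₖ Vₖᵀ` forces invertibility
of the capacitance block matrix `M` with `(k,l)` block `Vₖᵀ A⁻¹ Uₗ + δₖₗ Iₘ`. -/
theorem smw_capacitance_invertible (n N m : ℕ) (hN : 0 < N) (hm : 0 < m)
    (A : Matrix (Fin n) (Fin n) ℝ) (hA : IsUnit A)
    (U V : Fin N → Matrix (Fin n) (Fin m) ℝ)
    (M : Matrix (Fin N × Fin m) (Fin N × Fin m) ℝ)
    (hM : ∀ (k l : Fin N) (i j : Fin m),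
      M (k, i) (l, j) = ((V k)ᵀ * A⁻¹ * U l) i j + (if k = l ∧ i = j then 1 else 0))
    (hSum : IsUnit (A + ∑ k : Fin N, U k * (V k)ᵀ)) :
    IsUnit M := by
  let P : Matrix (Fin n) (Fin N × Fin m) ℝ := Matrix.of fun a p => U p.1 a p.2
  let Q : Matrix (Fin N × Fin m) (Fin n) ℝ := Matrix.of fun p a => V p.1 a p.2
  have h1 : ∑ k : Fin N, U k * (V k)ᵀ = P * Q := by
    ext a b
    simp [P, Q, Matrix.sum_apply, Matrix.mul_apply, Fintype.sum_prod_type]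
  have h2 : M = 1 + Q * A⁻¹ * P := by
    ext ⟨k, i⟩ ⟨l, j⟩
    rw [hM, add_comm]
    simp [P, Q, Matrix.mul_apply, Matrix.one_apply]
  rw [Matrix.isUnit_iff_isUnit_det] at hA hSum ⊢
  rw [h1, Matrix.det_add_mul P Q hA] at hSum
  rw [h2]
  exact (IsUnit.mul_iff.mp hSum).2
end
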